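/- arXiv:2008.13352 — 2 statements merged into one kernel-verified Lean document; each statement's English description precedes it below -/
import Mathlib

section
/- Let I ⊆ ℝ be an open interval, u = (u₁,u₂) a pair of functions I → ℂ, ζ₁ ≠ ζ₂ complex numbers, ψ₁ a ζ₁-wave and ψ₂ a ζ₂-wave for u with W(ψ₂,ψ₁) nowhere vanishing on I, and set v = B(u,(ζ₁,ζ₂),(ψ₁,ψ₂)). Then the function ψ₁/W(ψ₂,ψ₁) is a ζ₂-wave for v on I, and, symmetrically, ψ₂/W(ψ₁,ψ₂) is a ζ₁-wave for v on I. -/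
noncomputable section

/-- Wronskian of two `ℂ²`-valued functions: `W(φ,ψ) = φ₁ψ₂ − φ₂ψ₁`. -/
def Wr (φ ψ : ℝ → ℂ × ℂ) (x : ℝ) : ℂ := (φ x).1 * (ψ x).2 - (φ x).2 * (ψ x).1

/-- A ζ-wave for the pair `u = (u₁,u₂)` on the set `I`:
a differentiable solution of the Zakharov–Shabat system
`ψ₁' = −iζψ₁ + u₁ψ₂`, `ψ₂' = iζψ₂ − u₂ψ₁` on `I`. -/
def IsWave (I : Set ℝ) (u₁ u₂ : ℝ → ℂ) (ζ : ℂ) (ψ : ℝ → ℂ × ℂ) : Prop :=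
  ∀ x ∈ I,
    HasDerivAt (fun y => (ψ y).1) (-Complex.I * ζ * (ψ x).1 + u₁ x * (ψ x).2) x ∧
    HasDerivAt (fun y => (ψ y).2) (Complex.I * ζ * (ψ x).2 - u₂ x * (ψ x).1) x

/-- The Lax expression `L(u)φ = (i(φ₁' − u₁φ₂), −i(u₂φ₁ + φ₂'))`. -/
def Lax (u₁ u₂ : ℝ → ℂ) (φ : ℝ → ℂ × ℂ) (x : ℝ) : ℂ × ℂ :=
  (Complex.I * (deriv (fun y => (φ y).1) x - u₁ x * (φ x).2),
   -Complex.I * (u₂ x * (φ x).1 + deriv (fun y => (φ y).2) x))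

/-- The intertwining operator
`D(u,(ζ₁,ζ₂),(ψ₁,ψ₂))φ = (L(u) − ζ₂)φ + (ζ₂ − ζ₁)·(W(ψ₂,φ)/W(ψ₂,ψ₁))·ψ₁`. -/
def Dop (u₁ u₂ : ℝ → ℂ) (ζ₁ ζ₂ : ℂ) (ψ₁ ψ₂ φ : ℝ → ℂ × ℂ) (x : ℝ) : ℂ × ℂ :=
  Lax u₁ u₂ φ x - ζ₂ • φ x + ((ζ₂ - ζ₁) * Wr ψ₂ φ x / Wr ψ₂ ψ₁ x) • ψ₁ x

/-!
The Wronskian `W = W(ψ₂,ψ₁)` of waves for the same potential satisfies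
`W' = i(ζ₁ − ζ₂)(ψ₂,₁ψ₁,₂ + ψ₂,₂ψ₁,₁)`, and the bracket equals both `2ψ₂,₁ψ₁,₂ − W` and
`W + 2ψ₂,₂ψ₁,₁`. So in the derivative of `ψ₁/W` the multiple of `W` in `W'` moves the spectral
parameter from `ζ₁` to `ζ₂`, while the remaining product is absorbed into the potential: the first
form gives `v₁` and the second gives `v₂`. The other wave follows because exchanging the two waves
together with their parameters changes the sign of `W` but not the Bäcklund transform.
-/

/-- First component of the Bäcklund transform `B(u,(ζ₁,ζ₂),(ψ₁,ψ₂))`. It depends on `u` only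
through `u₁`, and equals `u₁` where the Wronskian vanishes. -/
def backlundFst (u₁ : ℝ → ℂ) (ζ₁ ζ₂ : ℂ) (ψ₁ ψ₂ : ℝ → ℂ × ℂ) (x : ℝ) : ℂ :=
  u₁ x + 2 * Complex.I * (ζ₂ - ζ₁) * (ψ₁ x).1 * (ψ₂ x).1 / Wr ψ₂ ψ₁ x

/-- Second component of the Bäcklund transform `B(u,(ζ₁,ζ₂),(ψ₁,ψ₂))`. It depends on `u` only
through `u₂`, and equals `u₂` where the Wronskian vanishes. -/
def backlundSnd (u₂ : ℝ → ℂ) (ζ₁ ζ₂ : ℂ) (ψ₁ ψ₂ : ℝ → ℂ × ℂ) (x : ℝ) : ℂ :=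
  u₂ x - 2 * Complex.I * (ζ₂ - ζ₁) * (ψ₁ x).2 * (ψ₂ x).2 / Wr ψ₂ ψ₁ x

theorem wr_swap (φ ψ : ℝ → ℂ × ℂ) (x : ℝ) : Wr φ ψ x = -Wr ψ φ x := by
  simp only [Wr]
  ring

theorem backlundFst_swap (u₁ : ℝ → ℂ) (ζ₁ ζ₂ : ℂ) (ψ₁ ψ₂ : ℝ → ℂ × ℂ) :
    backlundFst u₁ ζ₂ ζ₁ ψ₂ ψ₁ = backlundFst u₁ ζ₁ ζ₂ ψ₁ ψ₂ := by
  funext x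
  rw [backlundFst, backlundFst, wr_swap ψ₁ ψ₂, div_neg]
  ring

theorem backlundSnd_swap (u₂ : ℝ → ℂ) (ζ₁ ζ₂ : ℂ) (ψ₁ ψ₂ : ℝ → ℂ × ℂ) :
    backlundSnd u₂ ζ₂ ζ₁ ψ₂ ψ₁ = backlundSnd u₂ ζ₁ ζ₂ ψ₁ ψ₂ := by
  funext x
  rw [backlundSnd, backlundSnd, wr_swap ψ₁ ψ₂, div_neg]
  ring

namespace IsWave

variable {I : Set ℝ} {u₁ u₂ : ℝ → ℂ}

theorem hasDerivAt_wr {ζ η : ℂ} {φ ψ : ℝ → ℂ × ℂ} (hφ : IsWave I u₁ u₂ ζ φ)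
    (hψ : IsWave I u₁ u₂ η ψ) {x : ℝ} (hx : x ∈ I) :
    HasDerivAt (Wr φ ψ)
      (Complex.I * (η - ζ) * ((φ x).1 * (ψ x).2 + (φ x).2 * (ψ x).1)) x := by
  obtain ⟨hφ₁, hφ₂⟩ := hφ x hx
  obtain ⟨hψ₁, hψ₂⟩ := hψ x hx
  exact ((hφ₁.mul hψ₂).sub (hφ₂.mul hψ₁)).congr_deriv (by ring)

variable {ζ₁ ζ₂ : ℂ} {ψ₁ ψ₂ : ℝ → ℂ × ℂ}

theorem backlund_inv_wr_smul (h₁ : IsWave I u₁ u₂ ζ₁ ψ₁) (h₂ : IsWave I u₁ u₂ ζ₂ ψ₂)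
    (hW : ∀ x ∈ I, Wr ψ₂ ψ₁ x ≠ 0) :
    IsWave I (backlundFst u₁ ζ₁ ζ₂ ψ₁ ψ₂) (backlundSnd u₂ ζ₁ ζ₂ ψ₁ ψ₂) ζ₂
      (fun x => (Wr ψ₂ ψ₁ x)⁻¹ • ψ₁ x) := by
  intro x hx
  have hWx : Wr ψ₂ ψ₁ x ≠ 0 := hW x hx
  have hasDerivAt_inv_wr := (h₂.hasDerivAt_wr h₁ hx).fun_inv hWx
  obtain ⟨hfst, hsnd⟩ := h₁ x hx
  have bracket_eq_sub : (ψ₂ x).1 * (ψ₁ x).2 + (ψ₂ x).2 * (ψ₁ x).1 =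
      2 * (ψ₂ x).1 * (ψ₁ x).2 - Wr ψ₂ ψ₁ x := by
    rw [Wr]
    ring
  have bracket_eq_add : (ψ₂ x).1 * (ψ₁ x).2 + (ψ₂ x).2 * (ψ₁ x).1 =
      Wr ψ₂ ψ₁ x + 2 * (ψ₂ x).2 * (ψ₁ x).1 := by
    rw [Wr]
    ring
  constructor
  · refine (hasDerivAt_inv_wr.mul hfst).congr_deriv ?_
    rw [bracket_eq_sub]
    simp only [backlundFst, Prod.smul_fst, Prod.smul_snd, smul_eq_mul]
    field_simp
    ring
  · refine (hasDerivAt_inv_wr.mul hsnd).congr_deriv ?_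
    rw [bracket_eq_add]
    simp only [backlundSnd, Prod.smul_fst, Prod.smul_snd, smul_eq_mul]
    field_simp
    ring

end IsWave

theorem statement3_general {I : Set ℝ} {u₁ u₂ : ℝ → ℂ} {ζ₁ ζ₂ : ℂ} {ψ₁ ψ₂ : ℝ → ℂ × ℂ}
    (h₁ : IsWave I u₁ u₂ ζ₁ ψ₁) (h₂ : IsWave I u₁ u₂ ζ₂ ψ₂)
    (hW : ∀ x ∈ I, Wr ψ₂ ψ₁ x ≠ 0) :
    IsWave I (backlundFst u₁ ζ₁ ζ₂ ψ₁ ψ₂) (backlundSnd u₂ ζ₁ ζ₂ ψ₁ ψ₂) ζ₂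
      (fun x => (Wr ψ₂ ψ₁ x)⁻¹ • ψ₁ x) ∧
    IsWave I (backlundFst u₁ ζ₁ ζ₂ ψ₁ ψ₂) (backlundSnd u₂ ζ₁ ζ₂ ψ₁ ψ₂) ζ₁
      (fun x => (Wr ψ₁ ψ₂ x)⁻¹ • ψ₂ x) := by
  have hW' : ∀ x ∈ I, Wr ψ₁ ψ₂ x ≠ 0 := fun x hx =>
    wr_swap ψ₁ ψ₂ x ▸ neg_ne_zero.mpr (hW x hx)
  refine ⟨h₁.backlund_inv_wr_smul h₂ hW, ?_⟩
  rw [← backlundFst_swap, ← backlundSnd_swap]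
  exact h₂.backlund_inv_wr_smul h₁ hW'

/-- with `v = B(u,(ζ₁,ζ₂),(ψ₁,ψ₂))` the Bäcklund transform, the function
`ψ₁/W(ψ₂,ψ₁)` is a `ζ₂`-wave for `v` on `I`, and symmetrically `ψ₂/W(ψ₁,ψ₂)`
is a `ζ₁`-wave for `v` on `I`. -/
theorem statement3 (a b : ℝ) (I : Set ℝ) (hI : I = Set.Ioo a b)
    (u₁ u₂ : ℝ → ℂ) (ζ₁ ζ₂ : ℂ) (hζ : ζ₁ ≠ ζ₂)
    (ψ₁ ψ₂ : ℝ → ℂ × ℂ)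
    (h₁ : IsWave I u₁ u₂ ζ₁ ψ₁) (h₂ : IsWave I u₁ u₂ ζ₂ ψ₂)
    (hW : ∀ x ∈ I, Wr ψ₂ ψ₁ x ≠ 0)
    (v₁ v₂ : ℝ → ℂ)
    (hv₁ : ∀ x, v₁ x = u₁ x + 2 * Complex.I * (ζ₂ - ζ₁) * (ψ₁ x).1 * (ψ₂ x).1 / Wr ψ₂ ψ₁ x)
    (hv₂ : ∀ x, v₂ x = u₂ x - 2 * Complex.I * (ζ₂ - ζ₁) * (ψ₁ x).2 * (ψ₂ x).2 / Wr ψ₂ ψ₁ x) :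
    IsWave I v₁ v₂ ζ₂ (fun x => (Wr ψ₂ ψ₁ x)⁻¹ • ψ₁ x) ∧
    IsWave I v₁ v₂ ζ₁ (fun x => (Wr ψ₁ ψ₂ x)⁻¹ • ψ₂ x) := by
  obtain ⟨rfl, rfl⟩ : v₁ = backlundFst u₁ ζ₁ ζ₂ ψ₁ ψ₂ ∧ v₂ = backlundSnd u₂ ζ₁ ζ₂ ψ₁ ψ₂ :=
    ⟨funext hv₁, funext hv₂⟩
  exact statement3_general h₁ h₂ hW
end
end

section
/- Let z₁, z₂ be complex numbers with Im z₁ > 0 and Im z₂ > 0, and let γ₁, γ₂ ∈ ℂ. Let M be the 2×2 matrix with entries M_{jk} = 2i·cosh(γ_j + conj(γ_k))/(z_j − conj(z_k)) for j,k ∈ {1,2}. Then (Π_{i,j=1}^{2} (conj(z_i) − z_j))·det M = 4·|z₁ − z₂|²·cosh(2 Re γ₁)·cosh(2 Re γ₂) + 16·(Im z₁)·(Im z₂)·|sinh(γ₁ − γ₂)|². -/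
noncomputable section

/-!
Clearing the denominators in the determinant of the `2 × 2` matrix `A j k / (x j - y k)` leaves a
combination of the two products in `A.det`; since
`(x 0 - y 1) * (x 1 - y 0) = (x 0 - y 0) * (x 1 - y 1) - (x 0 - x 1) * (y 0 - y 1)`,
it splits into a multiple of `A.det` and a multiple of `A 0 0 * A 1 1`.
For `A j k = cosh (γ j + δ k)` the determinant factors as `sinh (γ 0 - γ 1) * sinh (δ 0 - δ 1)`.
With `y = conj x` and `δ = conj γ`, the products `(x 0 - x 1) * (y 0 - y 1)` and
`sinh (γ 0 - γ 1) * sinh (δ 0 - δ 1)` become squared moduli.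
-/

open scoped ComplexConjugate

theorem prod_sub_mul_det_div_sub {K : Type*} [Field K] (A : Matrix (Fin 2) (Fin 2) K)
    {x y : Fin 2 → K} (hxy : ∀ j k, x j ≠ y k) :
    (∏ i, ∏ j, (y i - x j)) * (Matrix.of fun j k => A j k / (x j - y k)).det =
      (x 0 - y 0) * (x 1 - y 1) * A.det - (x 0 - x 1) * (y 0 - y 1) * (A 0 0 * A 1 1) := by
  have hsub (j k : Fin 2) : x j - y k ≠ 0 := sub_ne_zero.mpr (hxy j k)
  simp only [Matrix.det_fin_two, Matrix.of_apply, Fin.prod_univ_two]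
  field_simp [hsub]
  ring

theorem det_cosh_add (γ δ : Fin 2 → ℂ) :
    (Matrix.of fun j k => Complex.cosh (γ j + δ k)).det =
      Complex.sinh (γ 0 - γ 1) * Complex.sinh (δ 0 - δ 1) := by
  simp only [Matrix.det_fin_two, Matrix.of_apply, Complex.cosh_add, Complex.sinh_sub]
  ring

theorem prod_sub_mul_det_cosh_add_div_sub {z w : Fin 2 → ℂ} (hzw : ∀ j k, z j ≠ w k)
    (γ δ : Fin 2 → ℂ) :
    (∏ i, ∏ j, (w i - z j)) *
        (Matrix.of fun j k => Complex.cosh (γ j + δ k) / (z j - w k)).det =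
      (z 0 - w 0) * (z 1 - w 1) * (Complex.sinh (γ 0 - γ 1) * Complex.sinh (δ 0 - δ 1)) -
        (z 0 - z 1) * (w 0 - w 1) *
          (Complex.cosh (γ 0 + δ 0) * Complex.cosh (γ 1 + δ 1)) := by
  rw [← det_cosh_add]
  exact prod_sub_mul_det_div_sub (Matrix.of fun j k => Complex.cosh (γ j + δ k)) hzw

theorem cosh_add_conj (γ : ℂ) : Complex.cosh (γ + conj γ) = Real.cosh (2 * γ.re) := by
  rw [Complex.add_conj, Complex.ofReal_cosh]

theorem sub_conj_mul_sub_conj (z w : ℂ) :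
    (z - conj z) * (w - conj w) = -(4 * z.im * w.im) := by
  rw [Complex.sub_conj, Complex.sub_conj]
  push_cast
  linear_combination 4 * (z.im : ℂ) * w.im * Complex.I_sq

theorem sinh_sub_mul_sinh_conj_sub_conj (γ δ : ℂ) :
    Complex.sinh (γ - δ) * Complex.sinh (conj γ - conj δ) =
      Complex.normSq (Complex.sinh (γ - δ)) := by
  rw [← map_sub, Complex.sinh_conj, Complex.mul_conj]

theorem ne_conj_of_im_pos {z w : ℂ} (hz : 0 < z.im) (hw : 0 < w.im) : z ≠ conj w := by
  rintro rfl
  rw [Complex.conj_im] at hz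
  linarith

theorem statement12_general {z : Fin 2 → ℂ} (hz : ∀ j k, z j ≠ conj (z k)) (γ : Fin 2 → ℂ) :
    (∏ i, ∏ j, (conj (z i) - z j)) *
        (Matrix.of fun j k =>
          2 * Complex.I * Complex.cosh (γ j + conj (γ k)) / (z j - conj (z k))).det =
      ((4 * Complex.normSq (z 0 - z 1) * Real.cosh (2 * (γ 0).re) * Real.cosh (2 * (γ 1).re) +
          16 * (z 0).im * (z 1).im * Complex.normSq (Complex.sinh (γ 0 - γ 1)) : ℝ) : ℂ) := by
  have hsmul : (Matrix.of fun j k =>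
      2 * Complex.I * Complex.cosh (γ j + conj (γ k)) / (z j - conj (z k))) =
      (2 * Complex.I) •
        Matrix.of fun j k => Complex.cosh (γ j + conj (γ k)) / (z j - conj (z k)) := by
    ext j k
    exact mul_div_assoc _ _ _
  have hscalar : (2 * Complex.I) ^ 2 = -4 := by
    rw [mul_pow, Complex.I_sq]
    norm_num
  rw [hsmul, Matrix.det_smul, Fintype.card_fin, hscalar, mul_left_comm,
    prod_sub_mul_det_cosh_add_div_sub (w := fun k => conj (z k)) hz γ fun k => conj (γ k),
    sub_conj_mul_sub_conj, sinh_sub_mul_sinh_conj_sub_conj, cosh_add_conj, cosh_add_conj,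
    ← map_sub, Complex.mul_conj]
  push_cast
  ring

/-- the two-soliton denominator. For `z₁, z₂` in the upper half-plane and
`γ₁, γ₂ ∈ ℂ`, with `M_{jk} = 2i·cosh(γ_j + conj(γ_k))/(z_j − conj(z_k))`, one has
`(Π_{i,j} (conj(z_i) − z_j))·det M
  = 4|z₁ − z₂|²·cosh(2 Re γ₁)·cosh(2 Re γ₂) + 16·Im z₁·Im z₂·|sinh(γ₁ − γ₂)|²`. -/
theorem statement12 (z₁ z₂ γ₁ γ₂ : ℂ) (h₁ : 0 < z₁.im) (h₂ : 0 < z₂.im)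
    (M : Matrix (Fin 2) (Fin 2) ℂ)
    (hM : M = Matrix.of fun j k : Fin 2 =>
      2 * Complex.I * Complex.cosh (![γ₁, γ₂] j + (starRingEnd ℂ) (![γ₁, γ₂] k)) /
        (![z₁, z₂] j - (starRingEnd ℂ) (![z₁, z₂] k))) :
    (((starRingEnd ℂ) z₁ - z₁) * ((starRingEnd ℂ) z₁ - z₂) *
      ((starRingEnd ℂ) z₂ - z₁) * ((starRingEnd ℂ) z₂ - z₂)) * M.det
      = ((4 * Complex.normSq (z₁ - z₂) * Real.cosh (2 * γ₁.re) * Real.cosh (2 * γ₂.re) +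
          16 * z₁.im * z₂.im * Complex.normSq (Complex.sinh (γ₁ - γ₂)) : ℝ) : ℂ) := by
  have hz : ∀ j k, ![z₁, z₂] j ≠ conj (![z₁, z₂] k) := by
    simp [Fin.forall_fin_two, ne_conj_of_im_pos, h₁, h₂]
  simpa [hM, Fin.prod_univ_two, mul_assoc] using statement12_general hz ![γ₁, γ₂]
end
end
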